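/- Let E, F, G be Polish spaces, f : E → F and g : F → G measurable, and let X_k, Y_k, Z_k be random variables in E, F, G respectively. If (X_k, Y_k) converges in distribution to (X, f(X)) and (Y_k, Z_k) converges in distribution to (Y, g(Y)) where Y has the law of f(X), then (X_k, Y_k, Z_k) converges in distribution to (X, f(X), g(f(X))). -/

import Mathlib

open MeasureTheory Filter

/-!
The laws of the triples `(X_k, Y_k, Z_k)` are tight because the laws of `(X_k, Y_k)` and of
`(Y_k, Z_k)` converge, so by Prokhorov's theorem it suffices to identify their cluster points.
A cluster point has the limiting law of `(Y_k, Z_k)` as its second marginal, hence is carried by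
`{(x, y, z) | z = g y}`; on that set a triple is recovered from `(x, y)`, so the cluster point is
determined by the limiting law of `(X_k, Y_k)`.
-/

open scoped Topology

section Measure

variable {α β γ : Type*} [MeasurableSpace α] [MeasurableSpace β] [MeasurableSpace γ]

lemma measure_eq_of_map_eq_of_ae_leftInverse {μ ν : Measure α} {p : α → β} {s : β → α}
    (hp : Measurable p) (hs : Measurable s) (hμ : ∀ᵐ x ∂μ, s (p x) = x)
    (hν : ∀ᵐ x ∂ν, s (p x) = x) (h : μ.map p = ν.map p) : μ = ν := by
  have map_map_eq_self {ρ : Measure α} (hρ : ∀ᵐ x ∂ρ, s (p x) = x) : (ρ.map p).map s = ρ := by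
    rw [Measure.map_map hs hp]
    exact (Measure.map_congr hρ).trans Measure.map_id
  rw [← map_map_eq_self hμ, h, map_map_eq_self hν]

lemma measure_eq_of_marginals_eq_of_ae_graph [MeasurableEq γ] {μ ν : Measure (α × β × γ)}
    {g : β → γ} (hg : Measurable g) (hν : ∀ᵐ p ∂ν, p.2.2 = g p.2.1)
    (h₁ : μ.map (Prod.map id Prod.fst) = ν.map (Prod.map id Prod.fst)) (h₂ : μ.snd = ν.snd) :
    μ = ν := by
  have ae_snd_iff (ρ : Measure (α × β × γ)) :
      (∀ᵐ q ∂ρ.snd, q.2 = g q.1) ↔ ∀ᵐ p ∂ρ, p.2.2 = g p.2.1 :=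
    ae_map_iff measurable_snd.aemeasurable
      (measurableSet_eq_fun measurable_snd (hg.comp measurable_fst))
  have hμ : ∀ᵐ p ∂μ, p.2.2 = g p.2.1 := by rwa [← ae_snd_iff, h₂, ae_snd_iff]
  have hs : Measurable fun q : α × β => (q.1, q.2, g q.2) := by fun_prop
  refine measure_eq_of_map_eq_of_ae_leftInverse (by fun_prop) hs ?_ ?_ h₁
  · exact hμ.mono fun p hp => by simp [← hp]
  · exact hν.mono fun p hp => by simp [← hp]

end Measure

lemma isTightMeasureSet_range_of_tendsto {S : Type*} [TopologicalSpace S]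
    [TopologicalSpace.IsCompletelyPseudoMetrizableSpace S] [SecondCountableTopology S]
    [MeasurableSpace S] [BorelSpace S] {μ : ℕ → ProbabilityMeasure S} {ν : ProbabilityMeasure S}
    (h : Tendsto μ atTop (𝓝 ν)) :
    IsTightMeasureSet (Set.range fun k => (μ k : Measure S)) := by
  let := TopologicalSpace.upgradeIsCompletelyPseudoMetrizable S
  have hc : IsCompact (closure (Set.range μ)) :=
    h.isCompact_insert_range.closure_of_subset (Set.subset_insert _ _)
  refine (isTightMeasureSet_of_isCompact_closure hc).subset ?_
  rintro _ ⟨k, rfl⟩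
  exact ⟨μ k, ⟨k, rfl⟩, rfl⟩

lemma isTightMeasureSet_of_marginals {E F G : Type*}
    [TopologicalSpace E] [MeasurableSpace E] [OpensMeasurableSpace E] [T2Space E]
    [TopologicalSpace F] [MeasurableSpace F]
    [TopologicalSpace G] [MeasurableSpace G] {S : Set (Measure (E × F × G))}
    (h₁ : IsTightMeasureSet ((fun μ => μ.map (Prod.map id Prod.fst)) '' S))
    (h₂ : IsTightMeasureSet (Measure.snd '' S)) : IsTightMeasureSet S := by
  refine .prodMk ?_ h₂
  have fst_map (μ : Measure (E × F × G)) : (μ.map (Prod.map id Prod.fst)).fst = μ.fst :=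
    Measure.map_map measurable_fst (by fun_prop)
  have image_fst : (fun μ => μ.map Prod.fst) '' ((fun μ => μ.map (Prod.map id Prod.fst)) '' S) =
      Measure.fst '' S := by
    rw [Set.image_image]
    exact Set.image_congr' fst_map
  exact image_fst ▸ h₁.map continuous_fst

lemma eq_of_mapClusterPt_of_tendsto_comp {ι S T : Type*} [TopologicalSpace S] [TopologicalSpace T]
    [T2Space T] {l : Filter ι} {u : ι → S} {x : S} {f : S → T} {y : T} (hf : ContinuousAt f x)
    (hx : MapClusterPt x l u) (h : Tendsto (f ∘ u) l (𝓝 y)) : f x = y :=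
  eq_of_nhds_neBot ((hx.continuousAt_comp hf).clusterPt.mono h)

section Convergence

variable {E F G : Type*}
  [TopologicalSpace E] [PolishSpace E] [MeasurableSpace E] [BorelSpace E]
  [TopologicalSpace F] [PolishSpace F] [MeasurableSpace F] [BorelSpace F]
  [TopologicalSpace G] [PolishSpace G] [MeasurableSpace G] [BorelSpace G]

theorem tendsto_of_tendsto_marginals_of_ae_graph {μ : ℕ → ProbabilityMeasure (E × F × G)}
    {ν : ProbabilityMeasure (E × F × G)} {g : F → G} (hg : Measurable g)
    (hν : ∀ᵐ p ∂(ν : Measure (E × F × G)), p.2.2 = g p.2.1)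
    (h₁ : Tendsto (fun k => (μ k).map (f := Prod.map id Prod.fst) (by fun_prop)) atTop
      (𝓝 (ν.map (f := Prod.map id Prod.fst) (by fun_prop))))
    (h₂ : Tendsto (fun k => (μ k).map (f := Prod.snd) (by fun_prop)) atTop
      (𝓝 (ν.map (f := Prod.snd) (by fun_prop)))) :
    Tendsto μ atTop (𝓝 ν) := by
  have tight : IsTightMeasureSet (Set.range fun k => (μ k : Measure (E × F × G))) := by
    have tight₁ := isTightMeasureSet_range_of_tendsto h₁
    have tight₂ := isTightMeasureSet_range_of_tendsto h₂
    simp only [ProbabilityMeasure.toMeasure_map] at tight₁ tight₂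
    refine isTightMeasureSet_of_marginals ?_ ?_
    · rwa [← Set.range_comp]
    · rwa [← Set.range_comp]
  have compact : IsCompact (closure (Set.range μ)) :=
    isCompact_closure_of_isTightMeasureSet (by simpa [Set.range] using tight)
  refine compact.tendsto_nhds_of_unique_mapClusterPt
    (.of_forall fun k => subset_closure ⟨k, rfl⟩) fun ρ _ hρ => ?_
  have marginal₁ := eq_of_mapClusterPt_of_tendsto_comp
    (ProbabilityMeasure.continuous_map (by fun_prop)).continuousAt hρ h₁
  have marginal₂ := eq_of_mapClusterPt_of_tendsto_comp
    (ProbabilityMeasure.continuous_map continuous_snd).continuousAt hρ h₂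
  exact Subtype.ext <| measure_eq_of_marginals_eq_of_ae_graph hg hν
    (congrArg Subtype.val marginal₁) (congrArg Subtype.val marginal₂)

end Convergence

section RandomVariables

variable {ι S Ω' : Type*} {Ω : ι → Type*} [∀ i, MeasurableSpace (Ω i)] {P : ∀ i, Measure (Ω i)}
  [∀ i, IsProbabilityMeasure (P i)] [MeasurableSpace Ω'] {P' : Measure Ω'}
  [IsProbabilityMeasure P'] {l : Filter ι}

lemma tendstoInDistribution_iff_forall_integral_tendsto [TopologicalSpace S] [MeasurableSpace S]
    [OpensMeasurableSpace S] {X : ∀ i, Ω i → S} {X' : Ω' → S}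
    (hX : ∀ i, AEMeasurable (X i) (P i)) (hX' : AEMeasurable X' P') :
    TendstoInDistribution X l X' P P' ↔ ∀ h : BoundedContinuousFunction S ℝ,
      Tendsto (fun i => ∫ ω, h (X i ω) ∂(P i)) l (𝓝 (∫ ω, h (X' ω) ∂P')) := by
  have integral_law (h : BoundedContinuousFunction S ℝ) (i : ι) :
      ∫ x, h x ∂((P i).map (X i)) = ∫ ω, h (X i ω) ∂(P i) :=
    integral_map (hX i) h.continuous.aestronglyMeasurable
  have integral_limit_law (h : BoundedContinuousFunction S ℝ) :
      ∫ x, h x ∂(P'.map X') = ∫ ω, h (X' ω) ∂P' :=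
    integral_map hX' h.continuous.aestronglyMeasurable
  simp only [← integral_law, ← integral_limit_law]
  exact ⟨fun hconv => ProbabilityMeasure.tendsto_iff_forall_integral_tendsto.1 hconv.tendsto,
    fun hconv => ⟨hX, hX', ProbabilityMeasure.tendsto_iff_forall_integral_tendsto.2 hconv⟩⟩

lemma tendsto_map_law_of_tendstoInDistribution_comp {T : Type*} [MeasurableSpace S]
    [TopologicalSpace T] [MeasurableSpace T] [OpensMeasurableSpace T]
    {X : ∀ i, Ω i → S} {X' : Ω' → S} {p : S → T} (hX : ∀ i, AEMeasurable (X i) (P i))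
    (hX' : AEMeasurable X' P') (hp : Measurable p)
    (h : TendstoInDistribution (fun i => p ∘ X i) l (p ∘ X') P P') :
    Tendsto (fun i => ProbabilityMeasure.map
        ⟨(P i).map (X i), Measure.isProbabilityMeasure_map (hX i)⟩ hp.aemeasurable) l
      (𝓝 (ProbabilityMeasure.map
        ⟨P'.map X', Measure.isProbabilityMeasure_map hX'⟩ hp.aemeasurable)) := by
  have map_law (i : ι) := AEMeasurable.map_map_of_aemeasurable hp.aemeasurable (hX i)
  have map_limit_law := AEMeasurable.map_map_of_aemeasurable hp.aemeasurable hX'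
  simpa only [ProbabilityMeasure.map, ProbabilityMeasure.coe_mk, map_law, map_limit_law]
    using h.tendsto

end RandomVariables

theorem stmt19_general {E F G : Type*}
    [TopologicalSpace E] [PolishSpace E] [MeasurableSpace E] [BorelSpace E]
    [TopologicalSpace F] [PolishSpace F] [MeasurableSpace F] [BorelSpace F]
    [TopologicalSpace G] [PolishSpace G] [MeasurableSpace G] [BorelSpace G]
    {Ω : ℕ → Type*} [∀ k, MeasurableSpace (Ω k)]
    {P : ∀ k, Measure (Ω k)} [∀ k, IsProbabilityMeasure (P k)]
    {Ω' : Type*} [MeasurableSpace Ω'] {P' : Measure Ω'} [IsProbabilityMeasure P']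
    {X : ∀ k, Ω k → E} {Y : ∀ k, Ω k → F} {Z : ∀ k, Ω k → G} {X' : Ω' → E} {Y' : Ω' → F}
    {g : F → G} (hg : Measurable g)
    (hXY : TendstoInDistribution (fun k ω => (X k ω, Y k ω)) atTop
      (fun ω => (X' ω, Y' ω)) P P')
    (hYZ : TendstoInDistribution (fun k ω => (Y k ω, Z k ω)) atTop
      (fun ω => (Y' ω, g (Y' ω))) P P') :
    TendstoInDistribution (fun k ω => (X k ω, Y k ω, Z k ω)) atTop
      (fun ω => (X' ω, Y' ω, g (Y' ω))) P P' := by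
  have hT (k : ℕ) : AEMeasurable (fun ω => (X k ω, Y k ω, Z k ω)) (P k) :=
    (hXY.forall_aemeasurable k).fst.prodMk (hYZ.forall_aemeasurable k)
  have hT' : AEMeasurable (fun ω => (X' ω, Y' ω, g (Y' ω))) P' :=
    hXY.aemeasurable_limit.fst.prodMk hYZ.aemeasurable_limit
  refine ⟨hT, hT', tendsto_of_tendsto_marginals_of_ae_graph hg ?_ ?_ ?_⟩
  · refine (ae_map_iff hT' ?_).2 (ae_of_all _ fun ω => rfl)
    exact measurableSet_eq_fun (by fun_prop) (by fun_prop)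
  · exact tendsto_map_law_of_tendstoInDistribution_comp hT hT' (by fun_prop) hXY
  · exact tendsto_map_law_of_tendstoInDistribution_comp hT hT' measurable_snd hYZ

/-- Weak convergence of coupled random variables: if `(X_k, Y_k) ⇒ (X, f(X))` and
`(Y_k, Z_k) ⇒ (Y, g(Y))` with `Y` distributed as `f(X)`, then
`(X_k, Y_k, Z_k) ⇒ (X, f(X), g(f(X)))`. -/
theorem stmt19 {E F G : Type*}
    [TopologicalSpace E] [PolishSpace E] [MeasurableSpace E] [BorelSpace E]
    [TopologicalSpace F] [PolishSpace F] [MeasurableSpace F] [BorelSpace F]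
    [TopologicalSpace G] [PolishSpace G] [MeasurableSpace G] [BorelSpace G]
    {Ω : ℕ → Type*} [∀ k, MeasurableSpace (Ω k)]
    (P : ∀ k, Measure (Ω k)) [∀ k, IsProbabilityMeasure (P k)]
    {Ω' : Type*} [MeasurableSpace Ω'] (P' : Measure Ω') [IsProbabilityMeasure P']
    (X : ∀ k, Ω k → E) (Y : ∀ k, Ω k → F) (Z : ∀ k, Ω k → G) (X' : Ω' → E)
    (hXmeas : ∀ k, Measurable (X k)) (hYmeas : ∀ k, Measurable (Y k))
    (hZmeas : ∀ k, Measurable (Z k)) (hX'meas : Measurable X')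
    (f : E → F) (g : F → G) (hf : Measurable f) (hg : Measurable g)
    (hconv1 : ∀ h : BoundedContinuousFunction (E × F) ℝ,
      Tendsto (fun k => ∫ ω, h (X k ω, Y k ω) ∂(P k)) atTop
        (nhds (∫ ω, h (X' ω, f (X' ω)) ∂P')))
    (hconv2 : ∀ h : BoundedContinuousFunction (F × G) ℝ,
      Tendsto (fun k => ∫ ω, h (Y k ω, Z k ω) ∂(P k)) atTop
        (nhds (∫ ω, h (f (X' ω), g (f (X' ω))) ∂P'))) :
    ∀ h : BoundedContinuousFunction (E × F × G) ℝ,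
      Tendsto (fun k => ∫ ω, h (X k ω, Y k ω, Z k ω) ∂(P k)) atTop
        (nhds (∫ ω, h (X' ω, f (X' ω), g (f (X' ω))) ∂P')) := by
  refine (tendstoInDistribution_iff_forall_integral_tendsto (by fun_prop) (by fun_prop)).1
    (stmt19_general hg ?_ ?_)
  · exact (tendstoInDistribution_iff_forall_integral_tendsto (by fun_prop) (by fun_prop)).2 hconv1
  · exact (tendstoInDistribution_iff_forall_integral_tendsto (by fun_prop) (by fun_prop)).2 hconv2
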